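/- Let (A, m) be a noetherian local ring, M a finitely generated A-module, J an m-primary ideal, and I an ideal of A with ht((I + Ann_A M)/Ann_A M) > 0. Suppose R is a set of elements of J generating an ideal (R) such that (R)J^n I^u M = J^{n+1} I^u M for some fixed u and all sufficiently large n (i.e., (R) is a reduction of J with respect to I^u M). Then e_A(J, M) = e_A((R), M), where both multiplicities are Hilbert–Samuel multiplicities on M. -/

import Mathlib

open IsLocalRing

section MixedMultDefs

variable (A : Type*) [CommRing A]

/-- The length of an `A`-module `M`, defined as the height of `⊤` in the lattice of
submodules of `M` (i.e. the supremum of lengths of chains of submodules). -/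
noncomputable def modLength (M : Type*) [AddCommGroup M] [Module A M] : ℕ∞ :=
  Order.height (⊤ : Submodule A M)

/-- The length of a module as a natural number (`0` if the length is infinite). -/
noncomputable def lenNat (M : Type*) [AddCommGroup M] [Module A M] : ℕ :=
  (modLength A M).toNat

/-- The height of an ideal: the infimum of the heights of the prime ideals containing it. -/
noncomputable def idealHeight (I : Ideal A) : ℕ∞ :=
  ⨅ (p : PrimeSpectrum A) (_ : I ≤ p.asIdeal), Order.height p

/-- The Krull dimension of a module `M`, i.e. the Krull dimension of `A / Ann_A M`. -/
noncomputable def modDim (M : Type*) [AddCommGroup M] [Module A M] : WithBot ℕ∞ :=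
  ringKrullDim (A ⧸ Module.annihilator A M)

/-- `x` is a Rees superficial element of the family of ideals `I = (I 0, …, I (t-1))` with
respect to `M`, as an element of the ideal `I i`:  `x ∈ I i` and
`xM ∩ I_1^{n_1} ⋯ I_i^{n_i + 1} ⋯ I_t^{n_t} M = x I_1^{n_1} ⋯ I_i^{n_i} ⋯ I_t^{n_t} M`
for all sufficiently large `n i` and arbitrary other exponents. -/
def IsReesSuperficial (M : Type*) [AddCommGroup M] [Module A M] {t : ℕ}
    (I : Fin t → Ideal A) (i : Fin t) (x : A) : Prop :=
  x ∈ I i ∧ ∃ N : ℕ, ∀ n : Fin t → ℕ, N ≤ n i →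
    (Ideal.span {x} • (⊤ : Submodule A M)) ⊓
        ((∏ j, I j ^ (n j + if j = i then 1 else 0)) • (⊤ : Submodule A M)) =
      Ideal.span {x} • ((∏ j, I j ^ (n j)) • (⊤ : Submodule A M))

/-- `x 0, …, x (t-1)` is a Rees superficial sequence of the family `I` with respect to `M`,
where the assignment `c` records to which ideal each element of the sequence belongs:
`x i` is a Rees superficial element of `I`, as an element of `I (c i)`, with respect to
`M / (x 0, …, x (i-1)) M`. -/
def IsReesSuperficialSeq (M : Type*) [AddCommGroup M] [Module A M] {t s : ℕ}
    (I : Fin s → Ideal A) (x : Fin t → A) (c : Fin t → Fin s) : Prop :=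
  ∀ i : Fin t,
    IsReesSuperficial A
      (M ⧸ ((Ideal.span (x '' {j | (j : ℕ) < (i : ℕ)})) • (⊤ : Submodule A M)))
      I (c i) (x i)

/-- The assignment `c` has type `(k 0, …, k (s-1))`: for each `i`, exactly `k i` members of
the sequence are assigned to the ideal indexed by `i`. -/
def OfTypeCount {t s : ℕ} (c : Fin t → Fin s) (k : Fin s → ℕ) : Prop :=
  ∀ i : Fin s, (Finset.univ.filter fun j => c j = i).card = k i

/-- The ideal generated by the members of the sequence `x` assigned (by `c`) to index `i`. -/
def jrIdeal {t s : ℕ} (x : Fin t → A) (c : Fin t → Fin s) (i : Fin s) : Ideal A :=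
  Ideal.span (x '' {j | c j = i})

/-- The defining equation of a joint reduction:  all members of the sequence lie in their
assigned ideals, and `I_1^{n_1+1} ⋯ I_s^{n_s+1} M = Σ_i (𝔍_i) I_1^{n_1+1} ⋯ I_i^{n_i} ⋯
I_s^{n_s+1} M` for all sufficiently large `n_1, …, n_s`, where `𝔍_i` consists of the
members of the sequence assigned to `I i`. -/
def IsJointReductionEq (M : Type*) [AddCommGroup M] [Module A M] {t s : ℕ}
    (I : Fin s → Ideal A) (x : Fin t → A) (c : Fin t → Fin s) : Prop :=
  (∀ j, x j ∈ I (c j)) ∧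
  ∃ N : ℕ, ∀ n : Fin s → ℕ, (∀ i, N ≤ n i) →
    ((∏ i, I i ^ (n i + 1)) • (⊤ : Submodule A M)) =
      ∑ i : Fin s, jrIdeal A x c i •
        ((∏ j, I j ^ (n j + if j = i then 0 else 1)) • (⊤ : Submodule A M))

/-- A joint reduction of the family `I` with respect to `M` of type `k`. -/
def IsJointReduction (M : Type*) [AddCommGroup M] [Module A M] {t s : ℕ}
    (I : Fin s → Ideal A) (x : Fin t → A) (c : Fin t → Fin s) (k : Fin s → ℕ) : Prop :=
  IsJointReductionEq A M I x c ∧ OfTypeCount c k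

/-- `x 1, …, x d` is a system of parameters for `M`:  `d = dim M`, the `x j` lie in the
maximal ideal, and `M / (x 1, …, x d) M` has finite length. -/
def IsSOP [IsLocalRing A] (M : Type*) [AddCommGroup M] [Module A M] {d : ℕ}
    (x : Fin d → A) : Prop :=
  modDim A M = (d : ℕ∞) ∧ (∀ j, x j ∈ maximalIdeal A) ∧
    IsFiniteLength A (M ⧸ ((Ideal.span (Set.range x)) • (⊤ : Submodule A M)))

/-- `e` is the Hilbert–Samuel multiplicity of the ideal `q` on the `d`-dimensional module
`M`: the function `n ↦ ℓ_A(M / q^n M)` is eventually given by a polynomial of degree at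
most `d` with `n^d`-coefficient `e / d!`. -/
def IsHSMult (M : Type*) [AddCommGroup M] [Module A M] (q : Ideal A) (d : ℕ) (e : ℕ) :
    Prop :=
  ∃ P : Polynomial ℚ, P.natDegree ≤ d ∧
    (∃ N : ℕ, ∀ n : ℕ, N ≤ n →
      IsFiniteLength A (M ⧸ (q ^ n • (⊤ : Submodule A M))) ∧
      (lenNat A (M ⧸ (q ^ n • (⊤ : Submodule A M))) : ℚ) = P.eval (n : ℚ)) ∧
    (e : ℚ) = P.coeff d * (Nat.factorial d : ℚ)

/-- The subquotient `J^{n_0} I_1^{n_1} ⋯ I_s^{n_s} M / J^{n_0+1} I_1^{n_1} ⋯ I_s^{n_s} M`. -/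
abbrev mixedSub (M : Type*) [AddCommGroup M] [Module A M] {s : ℕ} (J : Ideal A)
    (I : Fin s → Ideal A) (n : Fin (s + 1) → ℕ) : Submodule A M :=
  (J ^ (n 0) * ∏ i : Fin s, I i ^ (n i.succ)) • (⊤ : Submodule A M)

/-- continued -/
abbrev mixedPiece (M : Type*) [AddCommGroup M] [Module A M] {s : ℕ} (J : Ideal A)
    (I : Fin s → Ideal A) (n : Fin (s + 1) → ℕ) :=
  ↥(mixedSub A M J I n) ⧸
    (Submodule.comap (mixedSub A M J I n).subtype
      ((J ^ (n 0 + 1) * ∏ i : Fin s, I i ^ (n i.succ)) • (⊤ : Submodule A M)))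

/-- `e` is the mixed multiplicity `e_A(J^{[k_0+1]}, I_1^{[k_1]}, …, I_s^{[k_s]}; M)`:
the function `(n_0, …, n_s) ↦ ℓ_A(J^{n_0} I_1^{n_1} ⋯ I_s^{n_s} M / J^{n_0+1} I_1^{n_1}
⋯ I_s^{n_s} M)` is, for all sufficiently large `n_0, …, n_s`, given by a polynomial of
total degree at most `k_0 + k_1 + ⋯ + k_s` whose coefficient of
`n_0^{k_0} n_1^{k_1} ⋯ n_s^{k_s}` is `e / (k_0! k_1! ⋯ k_s!)`. -/
def IsMixedMult (M : Type*) [AddCommGroup M] [Module A M] {s : ℕ} (J : Ideal A)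
    (I : Fin s → Ideal A) (k0 : ℕ) (k : Fin s → ℕ) (e : ℕ) : Prop :=
  ∃ P : MvPolynomial (Fin (s + 1)) ℚ, P.totalDegree ≤ k0 + ∑ i, k i ∧
    (∃ N : ℕ, ∀ n : Fin (s + 1) → ℕ, (∀ i, N ≤ n i) →
      IsFiniteLength A (mixedPiece A M J I n) ∧
      (lenNat A (mixedPiece A M J I n) : ℚ) =
        MvPolynomial.eval (fun i => (n i : ℚ)) P) ∧
    (e : ℚ) = MvPolynomial.coeff (Finsupp.equivFunOnFinite.symm (Fin.cons k0 k)) P *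
      ((Nat.factorial k0 * ∏ i, Nat.factorial (k i) : ℕ) : ℚ)

/-- `e` is the mixed multiplicity `e_A(I_1^{[k_1]}, …, I_s^{[k_s]}; M)` of a family of
`m`-primary ideals: the function `(n_1, …, n_s) ↦ ℓ_A(M / I_1^{n_1} ⋯ I_s^{n_s} M)` is, for
all sufficiently large `n_1, …, n_s`, given by a polynomial of total degree at most
`k_1 + ⋯ + k_s` whose coefficient of `n_1^{k_1} ⋯ n_s^{k_s}` is `e / (k_1! ⋯ k_s!)`. -/
def IsMixedMultPrimary (M : Type*) [AddCommGroup M] [Module A M] {s : ℕ}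
    (I : Fin s → Ideal A) (k : Fin s → ℕ) (e : ℕ) : Prop :=
  ∃ P : MvPolynomial (Fin s) ℚ, P.totalDegree ≤ ∑ i, k i ∧
    (∃ N : ℕ, ∀ n : Fin s → ℕ, (∀ i, N ≤ n i) →
      IsFiniteLength A (M ⧸ ((∏ i, I i ^ (n i)) • (⊤ : Submodule A M))) ∧
      (lenNat A (M ⧸ ((∏ i, I i ^ (n i)) • (⊤ : Submodule A M))) : ℚ) =
        MvPolynomial.eval (fun i => (n i : ℚ)) P) ∧
    (e : ℚ) = MvPolynomial.coeff (Finsupp.equivFunOnFinite.symm k) P *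
      ((∏ i, Nat.factorial (k i) : ℕ) : ℚ)

/-- The submodule `(0_M : I^∞) = ⋃_n (0_M : I^n)` of `M`. -/
def satSub (M : Type*) [AddCommGroup M] [Module A M] (I : Ideal A) : Submodule A M :=
  ⨆ n : ℕ, Submodule.torsionBySet A M ((I ^ n : Ideal A) : Set A)

/-- A polynomial function on an `A`-module `V` with values in the residue field of `A`:
an element of the subalgebra of functions generated by the linear ones. -/
def IsPolyFun [IsLocalRing A] (V : Type*) [AddCommGroup V] [Module A V]
    (f : V → ResidueField A) : Prop :=
  f ∈ Algebra.adjoin A {g : V → ResidueField A | ∃ l : V →ₗ[A] ResidueField A, g = ⇑l}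

/-- A Zariski open subset of an `A`-module `V` (for `V` a finite-dimensional vector space
over the residue field, this is the usual Zariski topology): the complement of the common
zero locus of a set of polynomial functions. -/
def IsZariskiOpen [IsLocalRing A] (V : Type*) [AddCommGroup V] [Module A V]
    (U : Set V) : Prop :=
  ∃ S : Set (V → ResidueField A), (∀ f ∈ S, IsPolyFun A V f) ∧
    U = {v | ∃ f ∈ S, f v ≠ 0}

end MixedMultDefs

/-!
Put `N = I ^ u M` and `q = (R)`. Since `I` has positive height in `A / Ann M`, every prime in the
support of `M / N` strictly contains a prime in the support of `M`, so `dim M / N < dim M = d`. By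
Artin–Rees and the reduction equation on `N` there is `c` with `J ^ (k + c) M ∩ N ⊆ q ^ k M` for
all `k`. Hence
`ℓ(M / q ^ k M) ≤ ℓ(M / J ^ (k + c) M) + ℓ((M / N) / q ^ k (M / N))`,
and the last term is `O(k ^ (d - 1))`, as a comparison with the powers of a system of parameters of
`M / N` shows. Dividing by `k ^ d` and letting `k` grow gives `e(q) ≤ e(J)`; the reverse inequality
is clear from `q ⊆ J`.
-/

section Length

variable {A : Type*} [CommRing A] {M X : Type*} [AddCommGroup M] [Module A M] [AddCommGroup X]
  [Module A X]

lemma natCast_lenNat (h : IsFiniteLength A M) : (lenNat A M : ℕ∞) = Module.length A M := by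
  rw [lenNat, modLength, ← Module.length_eq_height,
    ENat.natCast_toNat (Module.length_ne_top_iff.2 h)]

lemma length_quotient_anti {S T : Submodule A M} (h : S ≤ T) :
    Module.length A (M ⧸ T) ≤ Module.length A (M ⧸ S) :=
  Module.length_le_of_surjective (Submodule.factor h) (Submodule.factor_surjective h)

lemma length_quotient_le_add_range (f : X →ₗ[A] M) (S : Submodule A M) :
    Module.length A (M ⧸ S) ≤ Module.length A (X ⧸ S.comap f) +
      Module.length A (M ⧸ (S ⊔ LinearMap.range f)) := by
  let g := Submodule.mapQ (S.comap f) S f le_rfl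
  have hg : LinearMap.range g = (LinearMap.range f).map S.mkQ := Submodule.range_mapQ ..
  rw [Module.length_eq_add_of_exact (LinearMap.range g).subtype (LinearMap.range g).mkQ
    (Submodule.subtype_injective _) (Submodule.mkQ_surjective _)
    (LinearMap.exact_subtype_mkQ _), hg,
    (Submodule.quotientQuotientEquivQuotientSup S (LinearMap.range f)).length_eq, ← hg]
  gcongr
  exact Module.length_le_of_surjective g.rangeRestrict g.surjective_rangeRestrict

lemma length_quotient_le_add_of_inf_le {S T N : Submodule A M} (h : T ⊓ N ≤ S) :
    Module.length A (M ⧸ S) ≤ Module.length A (M ⧸ T) + Module.length A (M ⧸ (S ⊔ N)) := by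
  have hTS : T.comap N.subtype ≤ S.comap N.subtype := fun x hx ↦ h ⟨hx, x.2⟩
  have hinj : Function.Injective (Submodule.mapQ (T.comap N.subtype) T N.subtype le_rfl) := by
    rw [← LinearMap.ker_eq_bot, Submodule.ker_mapQ, Submodule.mkQ_map_self]
  have hlength := length_quotient_le_add_range N.subtype S
  rw [Submodule.range_subtype] at hlength
  refine hlength.trans ?_
  gcongr
  exact (length_quotient_anti hTS).trans (Module.length_le_of_injective _ hinj)

lemma length_quotient_sup_mul_smul_le (N : Submodule A M) (x y : A) :
    Module.length A (M ⧸ (N ⊔ Ideal.span {x * y} • (⊤ : Submodule A M))) ≤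
      Module.length A (M ⧸ (N ⊔ Ideal.span {x} • (⊤ : Submodule A M))) +
        Module.length A (M ⧸ (N ⊔ Ideal.span {y} • (⊤ : Submodule A M))) := by
  rw [Submodule.ideal_span_singleton_smul, Submodule.ideal_span_singleton_smul,
    Submodule.ideal_span_singleton_smul]
  refine (length_quotient_le_add_range (LinearMap.lsmul A M y) _).trans ?_
  gcongr
  · refine length_quotient_anti (sup_le (fun m hm ↦ ?_) ?_)
    · exact Submodule.mem_sup_left (N.smul_mem y hm)
    · rintro _ ⟨m, -, rfl⟩
      refine Submodule.mem_sup_right ⟨m, trivial, ?_⟩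
      simp [mul_smul, smul_comm x y]
  · refine length_quotient_anti (sup_le_sup le_sup_left ?_)
    rintro _ ⟨m, -, rfl⟩
    exact ⟨m, rfl⟩

lemma length_quotient_sup_pow_smul_le (N : Submodule A M) (x : A) (k : ℕ) :
    Module.length A (M ⧸ (N ⊔ Ideal.span {x ^ k} • (⊤ : Submodule A M))) ≤
      k * Module.length A (M ⧸ (N ⊔ Ideal.span {x} • (⊤ : Submodule A M))) := by
  induction k with
  | zero => simp
  | succ k ih =>
    rw [pow_succ, Nat.cast_succ, add_one_mul]
    exact (length_quotient_sup_mul_smul_le N _ _).trans (add_le_add_left ih _)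

lemma length_quotient_sup_span_image_pow_smul_le {ι : Type*} (x : ι → A) (k : ℕ) (s : Finset ι)
    (N : Submodule A M) :
    Module.length A (M ⧸ (N ⊔ Ideal.span ((fun i ↦ x i ^ k) '' s) • (⊤ : Submodule A M))) ≤
      k ^ s.card * Module.length A (M ⧸ (N ⊔ Ideal.span (x '' s) • (⊤ : Submodule A M))) := by
  classical
  induction s using Finset.induction_on generalizing N with
  | empty =>
    rw [Finset.coe_empty, Set.image_empty, Set.image_empty, Finset.card_empty, pow_zero, one_mul]
  | insert i s hi ih =>
    rw [Finset.coe_insert, Set.image_insert_eq, Set.image_insert_eq, Ideal.span_insert,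
      Ideal.span_insert, Submodule.sup_smul, Submodule.sup_smul, ← sup_assoc, ← sup_assoc,
      Finset.card_insert_of_notMem hi, pow_succ, mul_assoc]
    refine (ih _).trans ?_
    gcongr
    rw [sup_right_comm, sup_right_comm N (Ideal.span {x i} • ⊤)]
    exact length_quotient_sup_pow_smul_le _ (x i) k

lemma length_quotient_span_range_pow_smul_le {r : ℕ} (x : Fin r → A) (k : ℕ) :
    Module.length A (M ⧸ Ideal.span (Set.range fun i ↦ x i ^ k) • (⊤ : Submodule A M)) ≤
      k ^ r * Module.length A (M ⧸ Ideal.span (Set.range x) • (⊤ : Submodule A M)) := by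
  have h := length_quotient_sup_span_image_pow_smul_le x k Finset.univ (⊥ : Submodule A M)
  rwa [bot_sup_eq, bot_sup_eq, Finset.coe_univ, Set.image_univ, Set.image_univ,
    Finset.card_univ, Fintype.card_fin] at h

end Length

section FiniteLength

variable {A : Type*} [CommRing A] {M : Type*} [AddCommGroup M] [Module A M]

lemma exists_pow_smul_top_eq_bot [IsNoetherian A M] [IsArtinian A M] {I : Ideal A}
    (hI : I ≤ Ideal.jacobson ⊥) : ∃ t : ℕ, I ^ t • (⊤ : Submodule A M) = ⊥ := by
  obtain ⟨t, ht⟩ := IsArtinian.monotone_stabilizes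
    ⟨fun n ↦ OrderDual.toDual (I ^ n • (⊤ : Submodule A M)),
      fun _ _ h ↦ Submodule.smul_mono_left (Ideal.pow_le_pow_right h)⟩
  have hstable : I ^ t • (⊤ : Submodule A M) = I ^ (t + 1) • ⊤ := ht (t + 1) t.le_succ
  refine ⟨t, Submodule.eq_bot_of_le_smul_of_le_jacobson_bot I _ (IsNoetherian.noetherian _) ?_ hI⟩
  rw [← Submodule.mul_smul, ← pow_succ', ← hstable]

lemma exists_pow_smul_top_le [IsNoetherian A M] {I : Ideal A} (hI : I ≤ Ideal.jacobson ⊥)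
    {N : Submodule A M} (hN : IsFiniteLength A (M ⧸ N)) :
    ∃ t : ℕ, I ^ t • (⊤ : Submodule A M) ≤ N := by
  have := (isFiniteLength_iff_isNoetherian_isArtinian.1 hN).2
  obtain ⟨t, ht⟩ := exists_pow_smul_top_eq_bot (M := M ⧸ N) hI
  refine ⟨t, ?_⟩
  rw [← N.ker_mkQ, LinearMap.le_ker_iff_map, Submodule.map_smul'', Submodule.map_top,
    Submodule.range_mkQ, ht]

lemma isFiniteLength_of_maximalIdeal_le_radical_annihilator [IsNoetherianRing A] [IsLocalRing A]
    [Module.Finite A M] (h : maximalIdeal A ≤ (Module.annihilator A M).radical) :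
    IsFiniteLength A M := by
  have hart : IsArtinianRing (A ⧸ Module.annihilator A M) := by
    by_cases htop : Module.annihilator A M = ⊤
    · have := Ideal.Quotient.subsingleton_iff.2 htop
      infer_instance
    · refine IsLocalRing.quotient_artinian_of_mem_minimalPrimes_of_isLocalRing _
        ⟨⟨inferInstance, le_maximalIdeal htop⟩, fun p hp _ ↦ h.trans ?_⟩
      exact hp.1.radical_le_iff.2 hp.2
  let := Module.quotientAnnihilator (R := A) (M := M)
  have : IsScalarTower A (A ⧸ Module.annihilator A M) M :=
    (Module.isTorsionBySet_annihilator A M).isScalarTower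
  have := Module.Finite.of_restrictScalars_finite A (A ⧸ Module.annihilator A M) M
  have : IsArtinian A M := isArtinian_of_surjective_algebraMap (R := A ⧸ Module.annihilator A M)
    Ideal.Quotient.mk_surjective
  exact isFiniteLength_iff_isNoetherian_isArtinian.2 ⟨inferInstance, this⟩

end FiniteLength

section SystemOfParameters

variable {A : Type*} [CommRing A] [IsNoetherianRing A] [IsLocalRing A]

lemma exists_span_range_radical_eq_maximalIdeal {d : ℕ} (hd : ringKrullDim A = d) :
    ∃ x : Fin d → A, (Ideal.span (Set.range x)).radical = maximalIdeal A := by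
  obtain ⟨s, hs, hcard⟩ := Ideal.exists_finset_card_eq_height_of_isNoetherianRing (maximalIdeal A)
  have hsd : s.card = d := by
    rw [← maximalIdeal_height_eq_ringKrullDim, ← hcard] at hd
    exact_mod_cast hd
  refine ⟨fun i ↦ (s.equivFinOfCardEq hsd).symm i, ?_⟩
  have hrange : Set.range (fun i ↦ ((s.equivFinOfCardEq hsd).symm i : A)) = s := by
    rw [Set.range_comp' Subtype.val, Equiv.range_eq_univ, Set.image_univ, Subtype.range_coe]
  rw [hrange]
  refine le_antisymm (Ideal.IsPrime.radical_le_iff inferInstance |>.2 hs.1.2) ?_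
  rw [Ideal.radical_eq_sInf]
  exact le_sInf fun p hp ↦ hs.2 ⟨hp.2, hp.1⟩ (le_maximalIdeal hp.2.ne_top)

variable {M : Type*} [AddCommGroup M] [Module A M] [Module.Finite A M]

lemma exists_isSOP {d : ℕ} (hd : modDim A M = d) : ∃ x : Fin d → A, IsSOP A M x := by
  let π := Ideal.Quotient.mk (Module.annihilator A M)
  have hπ : Function.Surjective π := Ideal.Quotient.mk_surjective
  have : Nontrivial (A ⧸ Module.annihilator A M) := by
    by_contra h
    rw [not_nontrivial_iff_subsingleton] at h
    rw [modDim, ringKrullDim_eq_bot_of_subsingleton] at hd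
    exact WithBot.bot_ne_coe hd
  have := IsLocalRing.of_surjective' π hπ
  have : IsLocalHom π := .of_surjective π hπ
  obtain ⟨y, hy⟩ := exists_span_range_radical_eq_maximalIdeal hd
  choose x hx using fun i ↦ hπ (y i)
  obtain rfl : π ∘ x = y := funext hx
  refine ⟨x, hd, fun i ↦ ?_, isFiniteLength_of_maximalIdeal_le_radical_annihilator fun a ha ↦ ?_⟩
  · rw [← maximalIdeal_comap π, Ideal.mem_comap, ← hy]
    exact Ideal.le_radical (Ideal.subset_span ⟨i, rfl⟩)
  · rw [← maximalIdeal_comap π, Ideal.mem_comap, ← hy, Set.range_comp, ← Ideal.map_span] at ha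
    obtain ⟨n, hn⟩ := ha
    rw [← map_pow, ← Ideal.mem_comap, Ideal.comap_map_of_surjective π hπ, ← RingHom.ker,
      Ideal.mk_ker, Submodule.mem_sup] at hn
    obtain ⟨b, hb, c, hc, hbc⟩ := hn
    refine ⟨n, ?_⟩
    rw [← hbc, Submodule.annihilator_quotient, Submodule.mem_colon]
    intro m _
    rw [add_smul, Module.mem_annihilator.1 hc, add_zero]
    exact Submodule.smul_mem_smul hb trivial

end SystemOfParameters

section Dimension

variable {A : Type*} [CommRing A]

lemma krullDim_add_one_le_of_forall_exists_lt {α : Type*} [Preorder α] {S T : Set α}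
    (hST : S ⊆ T) (h : ∀ x ∈ S, ∃ y ∈ T, y < x) :
    Order.krullDim S + 1 ≤ Order.krullDim T := by
  rcases S.eq_empty_or_nonempty with rfl | hS
  · rw [Order.krullDim_eq_bot, WithBot.bot_add]
    exact bot_le
  have := hS.to_subtype
  have := (hS.mono hST).to_subtype
  rw [Order.krullDim_eq_iSup_length, Order.krullDim_eq_iSup_length, ← WithBot.coe_one,
    ← WithBot.coe_add, ENat.iSup_add, WithBot.coe_le_coe, iSup_le_iff]
  intro l
  obtain ⟨y, hyT, hy⟩ := h l.head l.head.2
  let l' : LTSeries T := (l.map (Set.inclusion hST) fun _ _ hlt ↦ hlt).cons ⟨y, hyT⟩ hy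
  have hl' : l'.length = l.length + 1 := by
    change 0 + l.length + 1 = _
    omega
  exact le_iSup_of_le l' (by simp [hl'])

lemma exists_lt_mem_zeroLocus_of_idealHeight_pos {I K : Ideal A}
    (hI : 0 < idealHeight (A ⧸ K) (I.map (Ideal.Quotient.mk K))) {p : PrimeSpectrum A}
    (hKp : K ≤ p.asIdeal) (hIp : I ≤ p.asIdeal) :
    ∃ q ∈ PrimeSpectrum.zeroLocus (K : Set A), q < p := by
  let φ := K.primeSpectrumQuotientOrderIsoZeroLocus
  let p' : PrimeSpectrum.zeroLocus (K : Set A) := ⟨p, hKp⟩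
  have hφ : (φ.symm p').asIdeal.comap (Ideal.Quotient.mk K) = p.asIdeal :=
    congrArg (fun r ↦ r.1.asIdeal) (φ.apply_symm_apply p')
  have hpos : 0 < Order.height (φ.symm p') :=
    hI.trans_le (iInf₂_le (φ.symm p') (Ideal.map_le_iff_le_comap.2 (hφ ▸ hIp)))
  rw [Order.height_orderIso, pos_iff_ne_zero, Ne, Order.height_eq_zero, not_isMin_iff] at hpos
  obtain ⟨q, hq⟩ := hpos
  exact ⟨q, q.2, hq⟩

variable {M : Type*} [AddCommGroup M] [Module A M] [Module.Finite A M]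

lemma modDim_quotient_pow_smul_add_one_le {I : Ideal A}
    (hI : 0 < idealHeight (A ⧸ Module.annihilator A M)
      (I.map (Ideal.Quotient.mk (Module.annihilator A M)))) (u : ℕ) :
    modDim A (M ⧸ I ^ u • (⊤ : Submodule A M)) + 1 ≤ modDim A M := by
  rw [modDim, modDim, ← Module.supportDim_eq_ringKrullDim_quotient_annihilator,
    ← Module.supportDim_eq_ringKrullDim_quotient_annihilator, Module.supportDim,
    Module.supportDim, Module.support_quotient, Module.support_eq_zeroLocus]
  refine krullDim_add_one_le_of_forall_exists_lt Set.inter_subset_left fun p ⟨hpM, hpI⟩ ↦ ?_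
  exact exists_lt_mem_zeroLocus_of_idealHeight_pos hI hpM (p.isPrime.le_of_pow_le hpI)

end Dimension

section Growth

open Filter Topology

variable {A : Type*} [CommRing A] {M : Type*} [AddCommGroup M] [Module A M]

lemma span_singleton_pow_smul_top_le {x : A} {q : Ideal A}
    (h : Ideal.span {x} • (⊤ : Submodule A M) ≤ q • ⊤) (k : ℕ) :
    Ideal.span {x ^ k} • (⊤ : Submodule A M) ≤ q ^ k • ⊤ := by
  induction k with
  | zero => simp
  | succ k ih =>
    calc Ideal.span {x ^ (k + 1)} • (⊤ : Submodule A M)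
        = Ideal.span {x ^ k} • Ideal.span {x} • ⊤ := by
          rw [pow_succ, ← Ideal.span_singleton_mul_span_singleton, Submodule.mul_smul]
      _ ≤ Ideal.span {x ^ k} • q • ⊤ := smul_mono_right _ h
      _ = q • Ideal.span {x ^ k} • ⊤ := by
          rw [← Submodule.mul_smul, mul_comm, Submodule.mul_smul]
      _ ≤ q • q ^ k • ⊤ := smul_mono_right _ ih
      _ = q ^ (k + 1) • ⊤ := by rw [← Submodule.mul_smul, ← pow_succ']

lemma span_range_pow_smul_top_le {ι : Type*} {x : ι → A} {q : Ideal A}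
    (h : Ideal.span (Set.range x) • (⊤ : Submodule A M) ≤ q • ⊤) (k : ℕ) :
    Ideal.span (Set.range fun i ↦ x i ^ k) • (⊤ : Submodule A M) ≤ q ^ k • ⊤ := by
  rw [Ideal.span, Submodule.span_range_eq_iSup, Submodule.iSup_smul]
  refine iSup_le fun i ↦ span_singleton_pow_smul_top_le (.trans ?_ h) k
  exact Submodule.smul_mono_left (Ideal.span_mono (by simp))

variable [IsNoetherianRing A] [IsLocalRing A] [Module.Finite A M]

lemma exists_length_quotient_pow_smul_le {q : Ideal A} {d : ℕ} (hd : modDim A M = d)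
    (hq : IsFiniteLength A (M ⧸ q • (⊤ : Submodule A M))) :
    ∃ C : ℕ, ∀ k : ℕ, Module.length A (M ⧸ q ^ k • (⊤ : Submodule A M)) ≤ (C * k ^ d : ℕ) := by
  obtain ⟨x, -, hxm, hx⟩ := exists_isSOP hd
  obtain ⟨t, ht⟩ := exists_pow_smul_top_le (maximalIdeal_le_jacobson _) hq
  have hxt : Ideal.span (Set.range fun i ↦ x i ^ t) • (⊤ : Submodule A M) ≤ q • ⊤ := by
    refine (Submodule.smul_mono_left (Ideal.span_le.2 ?_)).trans ht
    rintro _ ⟨i, rfl⟩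
    exact Ideal.pow_mem_pow (hxm i) t
  refine ⟨t ^ d * lenNat A (M ⧸ Ideal.span (Set.range x) • (⊤ : Submodule A M)), fun k ↦ ?_⟩
  have hxk : Ideal.span (Set.range fun i ↦ x i ^ (t * k)) • (⊤ : Submodule A M) ≤ q ^ k • ⊤ := by
    simpa only [pow_mul] using span_range_pow_smul_top_le hxt k
  calc Module.length A (M ⧸ q ^ k • (⊤ : Submodule A M))
      ≤ (t * k : ℕ) ^ d * Module.length A (M ⧸ Ideal.span (Set.range x) • (⊤ : Submodule A M)) :=
        (length_quotient_anti hxk).trans (length_quotient_span_range_pow_smul_le x (t * k))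
    _ = _ := by
        rw [← natCast_lenNat hx]
        push_cast
        ring

lemma exists_modDim_eq_natCast [Nontrivial M] : ∃ r : ℕ, modDim A M = r := by
  have hbot : modDim A M ≠ ⊥ := by
    rwa [modDim, ← Module.supportDim_eq_ringKrullDim_quotient_annihilator,
      Module.supportDim_ne_bot_iff_nontrivial]
  have htop : modDim A M < ⊤ := (ringKrullDim_quotient_le _).trans_lt ringKrullDim_lt_top
  obtain ⟨n, hn⟩ := WithBot.ne_bot_iff_exists.1 hbot
  rw [← hn] at htop ⊢
  obtain ⟨r, rfl⟩ := ENat.ne_top_iff_exists.1 (WithBot.coe_lt_coe.1 htop).ne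
  exact ⟨r, rfl⟩

lemma tendsto_lenNat_quotient_pow_smul_div_pow_zero {q : Ideal A} {d : ℕ} (hd : modDim A M < d)
    (hq : IsFiniteLength A (M ⧸ q • (⊤ : Submodule A M))) :
    Tendsto (fun k : ℕ ↦ (lenNat A (M ⧸ q ^ k • (⊤ : Submodule A M)) : ℚ) / k ^ d) atTop (𝓝 0) := by
  rcases subsingleton_or_nontrivial M with hM | hM
  · simp [lenNat, modLength, ← Module.length_eq_height]
  obtain ⟨r, hr⟩ := exists_modDim_eq_natCast (A := A) (M := M)
  obtain ⟨C, hC⟩ := exists_length_quotient_pow_smul_le hr hq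
  have hrd : r < d := by
    rw [hr] at hd
    exact_mod_cast hd
  have hlen (k : ℕ) : (lenNat A (M ⧸ q ^ k • (⊤ : Submodule A M)) : ℚ) ≤ C * k ^ r := by
    rw [lenNat, modLength, ← Module.length_eq_height]
    exact_mod_cast ENat.toNat_le_of_le_natCast (hC k)
  have hlim : Tendsto (fun k : ℕ ↦ (C : ℚ) * ((k : ℚ) ^ r / (k : ℚ) ^ d)) atTop (𝓝 0) := by
    simpa using ((tendsto_pow_div_pow_atTop_zero hrd).comp
      tendsto_natCast_atTop_atTop).const_mul (C : ℚ)
  refine tendsto_of_tendsto_of_tendsto_of_le_of_le tendsto_const_nhds hlim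
    (fun k ↦ by positivity) (fun k ↦ ?_)
  rw [← mul_div_assoc]
  gcongr
  exact hlen k

end Growth

section Multiplicity

open Filter Topology

lemma tendsto_eval_div_pow {P : Polynomial ℚ} {d : ℕ} (hP : P.natDegree ≤ d) :
    Tendsto (fun x ↦ P.eval x / x ^ d) atTop (𝓝 (P.coeff d)) := by
  rcases hP.lt_or_eq with h | rfl
  · rw [Polynomial.coeff_eq_zero_of_natDegree_lt h]
    have hdeg : P.degree < (Polynomial.X ^ d : Polynomial ℚ).degree := by
      rw [Polynomial.degree_X_pow]
      exact Polynomial.degree_le_natDegree.trans_lt (by exact_mod_cast h)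
    simpa using P.div_tendsto_atTop_zero_of_degree_lt _ hdeg
  · rcases eq_or_ne P 0 with rfl | hP0
    · simp
    have hdeg : P.degree = (Polynomial.X ^ P.natDegree : Polynomial ℚ).degree := by
      rw [Polynomial.degree_X_pow, Polynomial.degree_eq_natDegree hP0]
    simpa using P.div_tendsto_atTop_leadingCoeff_div_of_degree_eq _ hdeg

variable {A : Type*} [CommRing A] {M : Type*} [AddCommGroup M] [Module A M] {J q : Ideal A}
  {d e e₁ e₂ : ℕ}

namespace IsHSMult

lemma eventually_isFiniteLength (h : IsHSMult A M q d e) :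
    ∀ᶠ n in atTop, IsFiniteLength A (M ⧸ q ^ n • (⊤ : Submodule A M)) := by
  obtain ⟨_, _, ⟨N, hN⟩, _⟩ := h
  exact eventually_atTop.2 ⟨N, fun n hn ↦ (hN n hn).1⟩

lemma isFiniteLength_quotient_smul (h : IsHSMult A M q d e) :
    IsFiniteLength A (M ⧸ q • (⊤ : Submodule A M)) := by
  obtain ⟨n, hn, hfin⟩ := ((eventually_ge_atTop 1).and h.eventually_isFiniteLength).exists
  have hle : q ^ n • (⊤ : Submodule A M) ≤ q • ⊤ :=
    Submodule.smul_mono_left (Ideal.pow_le_self (by omega))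
  exact hfin.of_surjective (Submodule.factor_surjective hle)

lemma tendsto_lenNat_div_pow (h : IsHSMult A M q d e) :
    Tendsto (fun n : ℕ ↦ (lenNat A (M ⧸ q ^ n • (⊤ : Submodule A M)) : ℚ) / n ^ d)
      atTop (𝓝 (e / d.factorial)) := by
  obtain ⟨P, hP, ⟨N, hN⟩, he⟩ := h
  rw [he, mul_div_cancel_right₀ _ (by positivity)]
  refine ((tendsto_eval_div_pow hP).comp tendsto_natCast_atTop_atTop).congr' ?_
  filter_upwards [eventually_ge_atTop N] with n hn
  rw [Function.comp_apply, (hN n hn).2]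

lemma tendsto_lenNat_add_div_pow (h : IsHSMult A M q d e) (c : ℕ) :
    Tendsto (fun n : ℕ ↦ (lenNat A (M ⧸ q ^ (n + c) • (⊤ : Submodule A M)) : ℚ) / n ^ d)
      atTop (𝓝 (e / d.factorial)) := by
  have hinv : Tendsto (fun n : ℕ ↦ 1 + c * (n : ℚ)⁻¹) atTop (𝓝 1) := by
    simpa using ((tendsto_inv_atTop_zero.comp tendsto_natCast_atTop_atTop).const_mul
      (c : ℚ)).const_add 1
  have hratio : Tendsto (fun n : ℕ ↦ ((n + c : ℕ) : ℚ) / n) atTop (𝓝 1) := by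
    refine hinv.congr' ?_
    filter_upwards [eventually_ne_atTop 0] with n hn
    push_cast
    field_simp
  have hlim := (h.tendsto_lenNat_div_pow.comp (tendsto_add_atTop_nat c)).mul (hratio.pow d)
  rw [one_pow, mul_one] at hlim
  refine hlim.congr' ?_
  filter_upwards [eventually_ne_atTop 0] with n hn
  rw [Function.comp_apply, div_pow, div_mul_div_cancel₀ (by positivity)]

lemma le_of_le (hqJ : q ≤ J) (h₁ : IsHSMult A M J d e₁) (h₂ : IsHSMult A M q d e₂) :
    e₁ ≤ e₂ := by
  have hlen : ∀ᶠ n : ℕ in atTop, (lenNat A (M ⧸ J ^ n • (⊤ : Submodule A M)) : ℚ) / n ^ d ≤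
      (lenNat A (M ⧸ q ^ n • (⊤ : Submodule A M)) : ℚ) / n ^ d := by
    filter_upwards [h₁.eventually_isFiniteLength, h₂.eventually_isFiniteLength] with n hJ hq
    have hle := length_quotient_anti (Submodule.smul_mono_left (N := (⊤ : Submodule A M))
      (Ideal.pow_right_mono hqJ n))
    rw [← natCast_lenNat hJ, ← natCast_lenNat hq] at hle
    gcongr
    exact_mod_cast hle
  have hlim := le_of_tendsto_of_tendsto h₁.tendsto_lenNat_div_pow h₂.tendsto_lenNat_div_pow hlen
  rw [div_le_div_iff_of_pos_right (by positivity)] at hlim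
  exact_mod_cast hlim

end IsHSMult

lemma pow_add_smul_eq_pow_smul {N : Submodule A M} {n : ℕ}
    (h : (q * J ^ n) • N = J ^ (n + 1) • N) (k : ℕ) :
    J ^ (n + k) • N = q ^ k • J ^ n • N := by
  induction k with
  | zero => simp
  | succ k ih =>
    calc J ^ (n + (k + 1)) • N = J • J ^ (n + k) • N := by
          rw [← Submodule.mul_smul, ← pow_succ', add_assoc]
      _ = q ^ k • J ^ (n + 1) • N := by
          rw [ih, ← Submodule.mul_smul, ← Submodule.mul_smul, ← Submodule.mul_smul, pow_succ']
          congr 1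
          ring
      _ = q ^ (k + 1) • J ^ n • N := by
          rw [← h, ← Submodule.mul_smul, ← Submodule.mul_smul, pow_succ, mul_assoc]

lemma exists_pow_add_smul_top_inf_le [IsNoetherianRing A] [Module.Finite A M]
    {N : Submodule A M} (h : ∃ n, (q * J ^ n) • N = J ^ (n + 1) • N) :
    ∃ c : ℕ, ∀ k, J ^ (k + c) • (⊤ : Submodule A M) ⊓ N ≤ q ^ k • ⊤ := by
  obtain ⟨n, hn⟩ := h
  obtain ⟨c, hc⟩ := J.exists_pow_inf_eq_pow_smul N
  refine ⟨n + c, fun k ↦ ?_⟩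
  calc J ^ (k + (n + c)) • (⊤ : Submodule A M) ⊓ N
      = J ^ (n + k) • (J ^ c • ⊤ ⊓ N) := by
        rw [hc _ (by omega)]
        congr 2
        omega
    _ ≤ J ^ (n + k) • N := smul_mono_right _ inf_le_right
    _ = q ^ k • J ^ n • N := pow_add_smul_eq_pow_smul hn k
    _ ≤ q ^ k • ⊤ := smul_mono_right _ le_top

lemma length_quotient_smul_top_quotient (a : Ideal A) (N : Submodule A M) :
    Module.length A ((M ⧸ N) ⧸ a • (⊤ : Submodule A (M ⧸ N))) =
      Module.length A (M ⧸ (a • ⊤ ⊔ N)) := by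
  have htop : a • (⊤ : Submodule A (M ⧸ N)) = (a • ⊤ : Submodule A M).map N.mkQ := by
    rw [Submodule.map_smul'', Submodule.map_top, Submodule.range_mkQ]
  rw [htop, (Submodule.quotientQuotientEquivQuotientSup N _).length_eq, sup_comm]

lemma isFiniteLength_quotient_quotient_smul {a : Ideal A} (N : Submodule A M)
    (h : IsFiniteLength A (M ⧸ a • (⊤ : Submodule A M))) :
    IsFiniteLength A ((M ⧸ N) ⧸ a • (⊤ : Submodule A (M ⧸ N))) := by
  rw [← Module.length_ne_top_iff, length_quotient_smul_top_quotient]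
  exact ne_top_of_le_ne_top (Module.length_ne_top_iff.2 h) (length_quotient_anti le_sup_left)

lemma length_quotient_smul_le_add_of_inf_le {a b : Ideal A} {N : Submodule A M}
    (h : b • (⊤ : Submodule A M) ⊓ N ≤ a • ⊤) :
    Module.length A (M ⧸ a • (⊤ : Submodule A M)) ≤
      Module.length A (M ⧸ b • (⊤ : Submodule A M)) +
        Module.length A ((M ⧸ N) ⧸ a • (⊤ : Submodule A (M ⧸ N))) := by
  rw [length_quotient_smul_top_quotient]
  exact length_quotient_le_add_of_inf_le h

lemma IsHSMult.le_of_reduction [IsNoetherianRing A] [IsLocalRing A] [Module.Finite A M]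
    {N : Submodule A M} (hN : modDim A (M ⧸ N) < d)
    (hred : ∃ n, (q * J ^ n) • N = J ^ (n + 1) • N)
    (h₁ : IsHSMult A M J d e₁) (h₂ : IsHSMult A M q d e₂) : e₂ ≤ e₁ := by
  obtain ⟨c, hc⟩ := exists_pow_add_smul_top_inf_le hred
  have hzero := tendsto_lenNat_quotient_pow_smul_div_pow_zero hN
    (isFiniteLength_quotient_quotient_smul N h₂.isFiniteLength_quotient_smul)
  have hlen : ∀ᶠ k : ℕ in atTop, (lenNat A (M ⧸ q ^ k • (⊤ : Submodule A M)) : ℚ) / k ^ d ≤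
      (lenNat A (M ⧸ J ^ (k + c) • (⊤ : Submodule A M)) : ℚ) / k ^ d +
        (lenNat A ((M ⧸ N) ⧸ q ^ k • (⊤ : Submodule A (M ⧸ N))) : ℚ) / k ^ d := by
    filter_upwards [h₂.eventually_isFiniteLength,
      (tendsto_add_atTop_nat c).eventually h₁.eventually_isFiniteLength] with k hq
      (hJ : IsFiniteLength A (M ⧸ J ^ (k + c) • (⊤ : Submodule A M)))
    have hle := length_quotient_smul_le_add_of_inf_le (hc k)
    rw [← natCast_lenNat hq, ← natCast_lenNat hJ,
      ← natCast_lenNat (isFiniteLength_quotient_quotient_smul N hq)] at hle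
    rw [← add_div]
    gcongr
    exact_mod_cast hle
  have hlim := le_of_tendsto_of_tendsto h₂.tendsto_lenNat_div_pow
    ((h₁.tendsto_lenNat_add_div_pow c).add hzero) hlen
  rw [add_zero, div_le_div_iff_of_pos_right (by positivity)] at hlim
  exact_mod_cast hlim

end Multiplicity

theorem multiplicity_eq_of_reduction_general {A : Type*} [CommRing A] [IsNoetherianRing A]
    [IsLocalRing A] {M : Type*} [AddCommGroup M] [Module A M] [Module.Finite A M]
    {J q : Ideal A} (hqJ : q ≤ J) {d : ℕ} (hdim : modDim A M = d) {N : Submodule A M}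
    (hN : modDim A (M ⧸ N) < modDim A M) (hred : ∃ n, (q * J ^ n) • N = J ^ (n + 1) • N)
    {e₁ e₂ : ℕ} (h₁ : IsHSMult A M J d e₁) (h₂ : IsHSMult A M q d e₂) : e₁ = e₂ :=
  le_antisymm (h₁.le_of_le hqJ h₂) (h₁.le_of_reduction (hdim ▸ hN) hred h₂)

/-- If `ht((I + Ann_A M)/Ann_A M) > 0` and `(R)` is an ideal generated
by a set `R` of elements of `J` such that `(R) J^n I^u M = J^{n+1} I^u M` for some fixed
`u` and all sufficiently large `n` (i.e. `(R)` is a reduction of `J` with respect to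
`I^u M`), then `e_A(J; M) = e_A((R); M)`. -/
theorem multiplicity_eq_of_reduction
    (A : Type*) [CommRing A] [IsNoetherianRing A] [IsLocalRing A]
    (M : Type*) [AddCommGroup M] [Module A M] [Module.Finite A M]
    (J : Ideal A) (hJ : J.radical = maximalIdeal A)
    (I : Ideal A)
    (hht : 0 < idealHeight (A ⧸ Module.annihilator A M)
        (Ideal.map (Ideal.Quotient.mk (Module.annihilator A M)) I))
    (d : ℕ) (hdim : modDim A M = (d : WithBot ℕ∞))
    (R : Set A) (hRJ : R ⊆ (J : Set A))
    (u : ℕ)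
    (hred : ∃ N : ℕ, ∀ n : ℕ, N ≤ n →
      (Ideal.span R * J ^ n * I ^ u) • (⊤ : Submodule A M) =
        (J ^ (n + 1) * I ^ u) • (⊤ : Submodule A M)) :
    ∀ e₁ e₂ : ℕ, IsHSMult A M J d e₁ → IsHSMult A M (Ideal.span R) d e₂ →
      e₁ = e₂ := by
  have hdrop : modDim A (M ⧸ I ^ u • (⊤ : Submodule A M)) < modDim A M := by
    rw [hdim, ← ENat.WithBot.add_one_le_natCast_iff, ← hdim]
    exact modDim_quotient_pow_smul_add_one_le hht u
  exact fun _ _ ↦ multiplicity_eq_of_reduction_general (Ideal.span_le.2 hRJ) hdim hdrop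
    (hred.imp fun n hn ↦ by simpa only [Submodule.mul_smul] using hn n le_rfl)
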